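/- Let Ω be a bounded open convex set in ℝ² containing the origin in its interior and satisfying sup_{θ∈S¹} sup_{δ>0} δ^{-1/2} μ(θ,δ) < ∞ (so that Ω is strictly convex and, for every P ∈ ℝ²∖{0}, the boundary point of Ω* at P/ρ*(P) has a well-defined outward unit normal n*_P, namely the unit vector in the direction of the unique point of ∂Ω having P as an outward normal direction). Then there exists a constant C₁, depending only on Ω, with the following property: if r ≥ 10, h ≥ 1, and I is a line segment with endpoints P, Q ∈ ℤ² whose threefold concentric parallel dilate 3I is contained in the annulus 𝒜(r,h) = {x ∈ ℝ² : r ≤ ρ*(x) ≤ r + 1/h}, then the angle ψ = ∠(n*_P, n*_Q) between the two normals (the nonnegative angle less than π) satisfies ψ ≤ C₁ arctan(1/(h|I|)), where |I| is the length of I. -/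

import Mathlib

/-! The estimate rests on the subgradient inequality for the convex function `ρ*` and on the
two-sided bound `c‖y‖ ≤ ρ*(y) ≤ R‖y‖` (`suppFn_facts`).

The normal `nP` is a positive multiple of a vector `x` with `⟪x, y⟫ ≤ ρ*(y)` for all `y` and
`⟪x, P⟫ = ρ*(P)`, that is, of a subgradient of `ρ*` at `P` (`exists_subgradient`); let `x'` be the
one at `Q`, and `D = Q - P`. Evaluating the subgradient inequalities at `P ± D` and `Q ± D`, which
are points of `3I`, gives `|⟪x, D⟫|, |⟪x', D⟫| ≤ 1/h` and `|⟪x - x', P⟫| ≤ 2/h`. If `h‖D‖` is large,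
then `D` is nearly orthogonal to `x`, whereas `⟪x, P⟫ = ρ*(P)` is comparable with `‖x‖‖P‖`; so
`P` and `D` are transversal, the determinant `cross P D` is at least of order `r‖D‖`, and the two
bounds on the components of `x - x'` give `‖x - x'‖ = O(1/(h‖D‖))` (`subgradient_sub_bound`).
As `‖x‖, ‖x'‖ ≥ c`, this bounds the angle (`angle_le_dist`). If `h‖D‖` is bounded, the trivial bound
`ψ ≤ π` suffices. -/

open MeasureTheory Set
open scoped Pointwise RealInnerProductSpace NNReal ENNReal

noncomputable section

abbrev E2 := EuclideanSpace ℝ (Fin 2)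

/-- The embedding of an integer vector into the Euclidean plane. -/
def ek (k : Fin 2 → ℤ) : E2 := (WithLp.equiv 2 (Fin 2 → ℝ)).symm fun i => (k i : ℝ)

/-- Number of lattice points in a set. -/
def latticeCount (S : Set E2) : ℕ := Nat.card {k : Fin 2 → ℤ | ek k ∈ S}

/-- The lattice rest `E_Ω(t) = card(tΩ ∩ ℤ²) − t²·area(Ω)`. -/
def latticeRest (Ω : Set E2) (t : ℝ) : ℝ :=
  (latticeCount (t • Ω) : ℝ) - t ^ 2 * (volume Ω).toReal

/-- The mean square discrepancy `𝒢_Ω(R,h) = ((1/h)∫_R^{R+h} |E_Ω(t)|² dt)^{1/2}`. -/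
def meanSquare (Ω : Set E2) (R h : ℝ) : ℝ :=
  Real.sqrt ((1 / h) * ∫ t in R..(R + h), (latticeRest Ω t) ^ 2)

/-- The support function `ρ*(ξ) = sup {⟨x,ξ⟩ : x ∈ Ω}`. -/
def suppFn (Ω : Set E2) (ξ : E2) : ℝ := sSup ((fun x => ⟪x, ξ⟫) '' Ω)

/-- `μ(θ,δ)`, the diameter of the cap `𝒞(θ,δ) = {x ∈ ∂Ω : ⟨x,θ⟩ ≥ ρ*(θ) − δ}`. -/
def capDiam (Ω : Set E2) (θ : E2) (δ : ℝ) : ℝ :=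
  Metric.diam {x ∈ frontier Ω | suppFn Ω θ - δ ≤ ⟪x, θ⟫}

/-- Curvature bounded below in the generalized sense:
`sup_{θ∈S¹} sup_{δ>0} δ^{-1/2} μ(θ,δ) < ∞`. -/
def CurvBddBelow (Ω : Set E2) : Prop :=
  ∃ K : ℝ, ∀ θ : E2, ‖θ‖ = 1 → ∀ δ : ℝ, 0 < δ → capDiam Ω θ δ ≤ K * Real.sqrt δ

/-- The determinant of two plane vectors. -/
def cross (x y : E2) : ℝ := x 0 * y 1 - x 1 * y 0

/-- Rotation of the plane by a right angle. -/
def rot (x : E2) : E2 := !₂[-x 1, x 0]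

theorem inner_E2 (x y : E2) : ⟪x, y⟫ = x 0 * y 0 + x 1 * y 1 := by
  simp [PiLp.inner_apply, Fin.sum_univ_two]
  ring

theorem norm_sq_E2 (x : E2) : ‖x‖ ^ 2 = x 0 ^ 2 + x 1 ^ 2 := by
  rw [← real_inner_self_eq_norm_sq, inner_E2]; ring

theorem norm_rot (x : E2) : ‖rot x‖ = ‖x‖ := by
  have h : ‖rot x‖ ^ 2 = ‖x‖ ^ 2 := by
    rw [norm_sq_E2, norm_sq_E2]; simp [rot]; ring
  exact (sq_eq_sq₀ (norm_nonneg _) (norm_nonneg _)).1 h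

theorem cross_rot_self (x : E2) : cross x (rot x) = ‖x‖ ^ 2 := by
  rw [norm_sq_E2]; simp [cross, rot]; ring

theorem abs_cross_le (x y : E2) : |cross x y| ≤ ‖x‖ * ‖y‖ := by
  apply abs_le_of_sq_le_sq _ (by positivity)
  rw [mul_pow, norm_sq_E2, norm_sq_E2, cross]
  nlinarith [sq_nonneg (x 0 * y 0 + x 1 * y 1)]

/-- The Cauchy–Binet identity. -/
theorem cross_mul_cross (a b w v : E2) :
    cross a b * cross w v = ⟪w, a⟫ * ⟪v, b⟫ - ⟪v, a⟫ * ⟪w, b⟫ := by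
  simp only [inner_E2, cross]; ring

/-- A vector is controlled by its inner products with two linearly independent vectors. -/
theorem norm_mul_abs_cross_le (a b w : E2) :
    ‖w‖ * |cross a b| ≤ |⟪w, a⟫| * ‖b‖ + ‖a‖ * |⟪w, b⟫| := by
  rcases eq_or_ne w 0 with rfl | hw
  · simp
  have hw' : 0 < ‖w‖ := norm_pos_iff.2 hw
  have h1 := cross_mul_cross a b w (rot w)
  rw [cross_rot_self] at h1
  have ha : |⟪rot w, a⟫| ≤ ‖w‖ * ‖a‖ := by
    simpa [norm_rot] using abs_real_inner_le_norm (rot w) a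
  have hb : |⟪rot w, b⟫| ≤ ‖w‖ * ‖b‖ := by
    simpa [norm_rot] using abs_real_inner_le_norm (rot w) b
  have h2 : |cross a b| * ‖w‖ ^ 2 ≤ |⟪w, a⟫| * (‖w‖ * ‖b‖) + (‖w‖ * ‖a‖) * |⟪w, b⟫| := by
    calc |cross a b| * ‖w‖ ^ 2 = |cross a b * ‖w‖ ^ 2| := by
          rw [abs_mul, abs_of_nonneg (sq_nonneg ‖w‖)]
      _ = |⟪w, a⟫ * ⟪rot w, b⟫ - ⟪rot w, a⟫ * ⟪w, b⟫| := by rw [h1]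
      _ ≤ |⟪w, a⟫ * ⟪rot w, b⟫| + |⟪rot w, a⟫ * ⟪w, b⟫| := abs_sub _ _
      _ ≤ _ := by rw [abs_mul, abs_mul]; gcongr
  refine le_of_mul_le_mul_left ?_ hw'
  linarith

theorem angle_le_dist {c : ℝ} (hc : 0 < c) (x y : E2) (hx : c ≤ ‖x‖) (hy : c ≤ ‖y‖) :
    InnerProductGeometry.angle x y ≤ Real.pi / (2 * c) * ‖x - y‖ := by
  set ψ := InnerProductGeometry.angle x y with hψ
  have h0 : 0 ≤ ψ := InnerProductGeometry.angle_nonneg x y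
  have hcos : Real.cos ψ ≤ 1 - 2 / Real.pi ^ 2 * ψ ^ 2 :=
    Real.cos_le_one_sub_mul_cos_sq (abs_le.2 ⟨by linarith [Real.pi_pos],
      InnerProductGeometry.angle_le_pi x y⟩)
  have hi : Real.cos ψ * (‖x‖ * ‖y‖) = ⟪x, y⟫ :=
    InnerProductGeometry.cos_angle_mul_norm_mul_norm x y
  have hn := norm_sub_sq_real x y
  have hxy : c * c ≤ ‖x‖ * ‖y‖ := by gcongr
  have hpi := Real.pi_pos
  have hq : 0 ≤ 2 / Real.pi ^ 2 * ψ ^ 2 := by positivity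
  have key : 4 * c ^ 2 / Real.pi ^ 2 * ψ ^ 2 ≤ ‖x - y‖ ^ 2 := by
    have e : 4 * c ^ 2 / Real.pi ^ 2 * ψ ^ 2 = 2 * (c * c) * (2 / Real.pi ^ 2 * ψ ^ 2) := by ring
    rw [e]
    have h3 : (c * c) * (2 / Real.pi ^ 2 * ψ ^ 2) ≤ (‖x‖ * ‖y‖) * (1 - Real.cos ψ) := by
      gcongr; linarith
    nlinarith [sq_nonneg (‖x‖ - ‖y‖)]
  refine (sq_le_sq₀ h0 (by positivity)).1 ?_
  rw [mul_pow]
  calc ψ ^ 2 = (Real.pi / (2 * c)) ^ 2 * (4 * c ^ 2 / Real.pi ^ 2 * ψ ^ 2) := by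
        field_simp; ring
    _ ≤ _ := by gcongr

theorem half_le_arctan {s : ℝ} (h0 : 0 ≤ s) (h1 : s ≤ 1) : s / 2 ≤ Real.arctan s := by
  have h := Real.sin_le (Real.arctan_nonneg.2 h0)
  rw [Real.sin_arctan] at h
  refine le_trans ?_ h
  gcongr
  exact Real.sqrt_le_iff.2 ⟨by norm_num, by nlinarith⟩

/-- A bounded set with `0` in its interior has support function comparable with the norm; moreover
the support function is positively homogeneous. -/
theorem suppFn_facts (Ω : Set E2) (hopen : IsOpen Ω) (hbdd : Bornology.IsBounded Ω)
    (h0 : (0 : E2) ∈ Ω) :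
    ∃ c R : ℝ, 0 < c ∧ 0 < R ∧ (∀ y, c * ‖y‖ ≤ suppFn Ω y) ∧ (∀ y, suppFn Ω y ≤ R * ‖y‖) ∧
      ∀ t : ℝ, 0 ≤ t → ∀ y, suppFn Ω (t • y) = t * suppFn Ω y := by
  obtain ⟨R, hR, hΩ⟩ := hbdd.exists_pos_norm_le
  obtain ⟨ε, hε, hball⟩ := Metric.isOpen_iff.1 hopen 0 h0
  have hup : ∀ y, ∀ z ∈ (fun x => ⟪x, y⟫) '' Ω, z ≤ R * ‖y‖ := by
    rintro y _ ⟨x, hx, rfl⟩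
    exact (real_inner_le_norm x y).trans (by gcongr; exact hΩ x hx)
  refine ⟨ε / 2, R, by positivity, hR, fun y => ?_, fun y => ?_, fun t ht y => ?_⟩
  · rcases eq_or_ne y 0 with rfl | hy
    · exact le_csSup ⟨_, hup 0⟩ ⟨0, h0, by simp⟩
    have hy' : 0 < ‖y‖ := norm_pos_iff.2 hy
    refine le_csSup ⟨_, hup y⟩ ⟨(ε / 2 / ‖y‖) • y, hball ?_, ?_⟩
    · rw [mem_ball_zero_iff, norm_smul, Real.norm_of_nonneg (by positivity)]
      field_simp; linarith
    · simp only [real_inner_smul_left, real_inner_self_eq_norm_sq]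
      field_simp
  · exact csSup_le ⟨_, 0, h0, rfl⟩ (hup y)
  · rw [suppFn, suppFn, ← smul_eq_mul, ← Real.sSup_smul_of_nonneg ht]
    congr 1
    ext z
    simp [Set.mem_smul_set, real_inner_smul_right]

/-- An outward unit normal of `{ρ ≤ 1}` at `p / ρ(p)` is a positive multiple of a subgradient of
the positively homogeneous function `ρ` at `p`. -/
theorem exists_subgradient {ρ : E2 → ℝ} {c R : ℝ} (hc : 0 < c) (hR : 0 < R)
    (hlo : ∀ y, c * ‖y‖ ≤ ρ y) (hup : ∀ y, ρ y ≤ R * ‖y‖)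
    (hom : ∀ t : ℝ, 0 ≤ t → ∀ y, ρ (t • y) = t * ρ y) {p n : E2} (hp : 0 < ρ p)
    (hn : ‖n‖ = 1) (hs : ∀ y, ρ y ≤ 1 → ⟪y - (ρ p)⁻¹ • p, n⟫ ≤ 0) :
    ∃ (k : ℝ) (x : E2), 0 < k ∧ n = k • x ∧ (∀ y, ⟪x, y⟫ ≤ ρ y) ∧ ⟪x, p⟫ = ρ p ∧
      c ≤ ‖x‖ ∧ ‖x‖ ≤ R := by
  obtain ⟨k, hk⟩ : ∃ k, k = (ρ p)⁻¹ * ⟪p, n⟫ := ⟨_, rfl⟩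
  have hs' : ∀ y, ρ y ≤ 1 → ⟪y, n⟫ ≤ k := by
    intro y hy
    have := hs y hy
    rw [inner_sub_left, real_inner_smul_left] at this
    linarith
  have hk0 : 0 < k := by
    have h := hs' (R⁻¹ • n) (by
      rw [hom _ (by positivity)]
      have := hup n
      rw [hn, mul_one] at this
      rw [inv_mul_le_iff₀ hR]; linarith)
    rw [real_inner_smul_left, real_inner_self_eq_norm_sq, hn] at h
    have : 0 < R⁻¹ := by positivity
    linarith
  have hle : ∀ y, ⟪k⁻¹ • n, y⟫ ≤ ρ y := by
    intro y
    rcases eq_or_ne y 0 with rfl | hy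
    · simpa using hlo 0
    have hy' : 0 < ρ y := lt_of_lt_of_le (by have := norm_pos_iff.2 hy; positivity) (hlo y)
    have h := hs' ((ρ y)⁻¹ • y) (by rw [hom _ (by positivity), inv_mul_cancel₀ hy'.ne'])
    rw [real_inner_smul_left, inv_mul_le_iff₀ hy'] at h
    rw [real_inner_smul_left, inv_mul_le_iff₀ hk0, real_inner_comm]
    linarith
  have heq : ⟪k⁻¹ • n, p⟫ = ρ p := by
    have h1 : k * ρ p = ⟪p, n⟫ := by rw [hk]; field_simp
    rw [real_inner_smul_left, real_inner_comm, ← h1]; field_simp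
  have hp' : 0 < ‖p‖ := by
    by_contra hcon
    have := hup p
    have h2 : R * ‖p‖ ≤ 0 := mul_nonpos_of_nonneg_of_nonpos hR.le (not_lt.1 hcon)
    linarith
  refine ⟨k, k⁻¹ • n, hk0, ?_, hle, heq, ?_, ?_⟩
  · rw [smul_smul, mul_inv_cancel₀ hk0.ne', one_smul]
  · refine le_of_mul_le_mul_right ?_ hp'
    calc c * ‖p‖ ≤ ρ p := hlo p
      _ = ⟪k⁻¹ • n, p⟫ := heq.symm
      _ ≤ _ := real_inner_le_norm _ _
  · set x := k⁻¹ • n with hx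
    have hx0 : 0 < ‖x‖ := by
      rw [hx, norm_smul, hn, mul_one, Real.norm_of_nonneg (by positivity)]; positivity
    have h := (hle x).trans (hup x)
    rw [real_inner_self_eq_norm_sq] at h
    exact le_of_mul_le_mul_right (by linarith [sq ‖x‖]) hx0

/-- Subgradients of `ρ` at two points `p`, `q` are close when `ρ` varies by at most `ε` on the
segment `[2p - q, 2q - p]`, which is assumed long compared with `ε`. -/
theorem subgradient_sub_bound {ρ : E2 → ℝ} {c R r ε : ℝ} (hc : 0 < c) (hR : 0 < R)
    (hlo : ∀ y, c * ‖y‖ ≤ ρ y) {p q x x' : E2} (hpq : p ≠ q) (hr : ε ≤ r) (hε : 0 < ε)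
    (hx : ∀ y, ⟪x, y⟫ ≤ ρ y) (hxp : ⟪x, p⟫ = ρ p) (hxR : ‖x‖ ≤ R)
    (hx' : ∀ y, ⟪x', y⟫ ≤ ρ y) (hxq : ⟪x', q⟫ = ρ q)
    (h1 : ρ ((2 : ℝ) • p - q) ≤ r + ε) (h2 : ρ ((2 : ℝ) • q - p) ≤ r + ε)
    (hp1 : r ≤ ρ p) (hp2 : ρ p ≤ r + ε) (hq1 : r ≤ ρ q) (hq2 : ρ q ≤ r + ε)
    (hbig : 4 / c * ε ≤ ‖q - p‖) :
    ‖x - x'‖ ≤ 24 * R / c * (ε / ‖q - p‖) := by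
  obtain ⟨D, hD⟩ : ∃ D, D = q - p := ⟨_, rfl⟩
  rw [← hD] at hbig ⊢
  have hD0 : 0 < ‖D‖ := by rw [hD]; exact norm_pos_iff.2 (sub_ne_zero.2 hpq.symm)
  have hr0 : 0 < r := hε.trans_le hr
  have hPn : ‖p‖ ≤ 2 * r / c := by
    rw [le_div_iff₀ hc]; linarith [hlo p]
  have hQn : ‖q‖ ≤ 2 * r / c := by
    rw [le_div_iff₀ hc]; linarith [hlo q]
  have hDn : ‖D‖ ≤ 4 * r / c := by
    rw [hD]
    refine (norm_sub_le q p).trans ?_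
    have : 4 * r / c = 2 * r / c + 2 * r / c := by ring
    linarith
  have e1 := hx q
  have e2 := (hx ((2 : ℝ) • p - q)).trans h1
  have e3 := hx' p
  have e4 := (hx' ((2 : ℝ) • q - p)).trans h2
  rw [inner_sub_right, real_inner_smul_right] at e2 e4
  have ha : |⟪x, D⟫| ≤ ε := by
    rw [hD, inner_sub_right, abs_le]; constructor <;> linarith
  have hb : |⟪x', D⟫| ≤ ε := by
    rw [hD, inner_sub_right, abs_le]; constructor <;> linarith
  have hwP : |⟪x - x', p⟫| ≤ 2 * ε := by
    rw [inner_sub_left, abs_le]; constructor <;> linarith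
  have hwD : |⟪x - x', D⟫| ≤ 2 * ε := by
    rw [inner_sub_left]
    exact (abs_sub _ _).trans (by linarith)
  -- Transversality of `p` and `D`: the Cauchy–Binet identity for the pairs `(p, D)` and `(x, D)`.
  have hcr : r * ‖D‖ / 2 ≤ R * |cross p D| := by
    have h := cross_mul_cross p D x D
    rw [hxp, real_inner_self_eq_norm_sq] at h
    have h3 : |cross p D * cross x D| ≤ |cross p D| * (R * ‖D‖) := by
      rw [abs_mul]
      have := abs_cross_le x D
      gcongr
      exact this.trans (by gcongr)
    have h4 : ⟪D, p⟫ * ⟪x, D⟫ ≤ ‖D‖ * (2 * r / c) * ε := by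
      refine (le_abs_self _).trans ?_
      rw [abs_mul]
      have := abs_real_inner_le_norm D p
      gcongr
      exact this.trans (by gcongr)
    have h5 : 2 * r / c * ε ≤ r / 2 * ‖D‖ := by
      have e : 2 * r / c * ε = r / 2 * (4 / c * ε) := by ring
      rw [e]; gcongr
    have h6 : ‖D‖ * (2 * r / c * ε) ≤ ‖D‖ * (r / 2 * ‖D‖) := by gcongr
    have h7 : r * ‖D‖ ^ 2 ≤ ρ p * ‖D‖ ^ 2 := by gcongr
    have h8 := le_abs_self (cross p D * cross x D)
    refine le_of_mul_le_mul_left ?_ hD0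
    nlinarith
  have hfin := norm_mul_abs_cross_le p D (x - x')
  have h9 : ‖x - x'‖ * |cross p D| ≤ 2 * ε * (4 * r / c) + 2 * r / c * (2 * ε) := by
    refine hfin.trans ?_
    gcongr
  have h10 : ‖x - x'‖ * (r * ‖D‖ / 2) ≤ R * (2 * ε * (4 * r / c) + 2 * r / c * (2 * ε)) := by
    calc ‖x - x'‖ * (r * ‖D‖ / 2) ≤ ‖x - x'‖ * (R * |cross p D|) := by gcongr
      _ = R * (‖x - x'‖ * |cross p D|) := by ring
      _ ≤ _ := by gcongr
  have hrD : 0 < r * ‖D‖ / 2 := by positivity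
  refine le_of_mul_le_mul_right (h10.trans (le_of_eq ?_)) hrD
  field_simp
  ring

/-- the angle estimate (6.4): let `Ω` be a bounded open convex planar
domain containing the origin with curvature bounded below in the generalized sense (so `Ω`
is strictly convex and each boundary point of `Ω*` has a unique outward unit normal).
There is a constant `C₁ > 0` such that whenever `r ≥ 10`, `h ≥ 1`, and `I` is a line
segment with endpoints `P ≠ Q ∈ ℤ²` whose threefold concentric dilate `3I` (the segment
from `2P − Q` to `2Q − P`) lies in the annulus `𝒜(r,h) = {r ≤ ρ* ≤ r + 1/h}`, the angle
`ψ = ∠(n*_P, n*_Q)` between the outward unit normals of `∂Ω*` at the boundary points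
`P/ρ*(P)` and `Q/ρ*(Q)` (characterized by the supporting property hypothesized below)
satisfies `ψ ≤ C₁ arctan(1/(h|I|))`. -/
theorem statement19 (Ω : Set E2) (hconv : Convex ℝ Ω) (hopen : IsOpen Ω)
    (hbdd : Bornology.IsBounded Ω) (h0 : (0 : E2) ∈ Ω) (hcurv : CurvBddBelow Ω) :
    ∃ C₁ : ℝ, 0 < C₁ ∧ ∀ r h : ℝ, 10 ≤ r → 1 ≤ h → ∀ P Q : Fin 2 → ℤ, ek P ≠ ek Q →
      segment ℝ ((2 : ℝ) • ek P - ek Q) ((2 : ℝ) • ek Q - ek P) ⊆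
        {x : E2 | r ≤ suppFn Ω x ∧ suppFn Ω x ≤ r + 1 / h} →
      ∀ nP nQ : E2, ‖nP‖ = 1 → ‖nQ‖ = 1 →
        (∀ y : E2, suppFn Ω y ≤ 1 → ⟪y - (suppFn Ω (ek P))⁻¹ • ek P, nP⟫ ≤ 0) →
        (∀ y : E2, suppFn Ω y ≤ 1 → ⟪y - (suppFn Ω (ek Q))⁻¹ • ek Q, nQ⟫ ≤ 0) →
        InnerProductGeometry.angle nP nQ ≤
          C₁ * Real.arctan (1 / (h * dist (ek P) (ek Q))) := by
  obtain ⟨c, R, hc, hR, hlo, hup, hom⟩ := suppFn_facts Ω hopen hbdd h0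
  -- Segments with `h‖D‖ < M` are covered by the trivial bound `ψ ≤ π`.
  obtain ⟨M, hM⟩ : ∃ M, M = max 1 (4 / c) := ⟨_, rfl⟩
  have hM1 : 1 ≤ M := hM ▸ le_max_left _ _
  have hMc : 4 / c ≤ M := hM ▸ le_max_right _ _
  have hM0 : 0 < M := by linarith
  have hpi := Real.pi_pos
  have hat : 0 < Real.arctan (1 / M) := Real.arctan_pos.2 (by positivity)
  obtain ⟨A, hA⟩ : ∃ A, A = Real.pi / (2 * c) * (24 * R / c) := ⟨_, rfl⟩
  have hA0 : 0 < A := by rw [hA]; positivity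
  refine ⟨Real.pi / Real.arctan (1 / M) + 2 * A, by positivity, ?_⟩
  intro r h hr hh P Q hPQ hseg nP nQ hnP hnQ hsP hsQ
  have hh0 : 0 < h := by linarith
  have hd0 : 0 < dist (ek P) (ek Q) := dist_pos.2 hPQ
  have hs0 : 0 < 1 / (h * dist (ek P) (ek Q)) := by positivity
  have hat0 : 0 < Real.arctan (1 / (h * dist (ek P) (ek Q))) := Real.arctan_pos.2 hs0
  rcases lt_or_ge (h * dist (ek P) (ek Q)) M with hsmall | hbig
  · have h1 : Real.arctan (1 / M) ≤ Real.arctan (1 / (h * dist (ek P) (ek Q))) :=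
      Real.arctan_le_arctan_iff.2 (by gcongr)
    calc InnerProductGeometry.angle nP nQ ≤ Real.pi := InnerProductGeometry.angle_le_pi _ _
      _ = Real.pi / Real.arctan (1 / M) * Real.arctan (1 / M) := by field_simp
      _ ≤ (Real.pi / Real.arctan (1 / M) + 2 * A) *
          Real.arctan (1 / (h * dist (ek P) (ek Q))) := by
        gcongr
        linarith
  · have hε0 : 0 < 1 / h := by positivity
    have hε1 : 1 / h ≤ r := by
      rw [div_le_iff₀ hh0]; nlinarith
    have m1 := hseg (left_mem_segment ℝ _ _)
    have m2 := hseg (right_mem_segment ℝ _ _)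
    have mP : ek P ∈ segment ℝ ((2 : ℝ) • ek P - ek Q) ((2 : ℝ) • ek Q - ek P) :=
      ⟨2 / 3, 1 / 3, by norm_num, by norm_num, by norm_num, by module⟩
    have mQ : ek Q ∈ segment ℝ ((2 : ℝ) • ek P - ek Q) ((2 : ℝ) • ek Q - ek P) :=
      ⟨1 / 3, 2 / 3, by norm_num, by norm_num, by norm_num, by module⟩
    have bP := hseg mP
    have bQ := hseg mQ
    obtain ⟨k, x, hk, rfl, hx, hxp, hxc, hxR⟩ :=
      exists_subgradient hc hR hlo hup hom (by linarith [bP.1]) hnP hsP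
    obtain ⟨k', x', hk', rfl, hx', hxq, hxc', -⟩ :=
      exists_subgradient hc hR hlo hup hom (by linarith [bQ.1]) hnQ hsQ
    have hdist : ‖ek Q - ek P‖ = dist (ek P) (ek Q) := by rw [dist_comm, dist_eq_norm]
    have hb := subgradient_sub_bound hc hR hlo hPQ hε1 hε0 hx hxp hxR hx' hxq m1.2 m2.2
      bP.1 bP.2 bQ.1 bQ.2 (by
        rw [hdist, mul_one_div, div_le_iff₀ hh0]
        linarith)
    rw [hdist, div_div] at hb
    rw [InnerProductGeometry.angle_smul_left_of_pos _ _ hk,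
      InnerProductGeometry.angle_smul_right_of_pos _ _ hk']
    have hs1 : 1 / (h * dist (ek P) (ek Q)) ≤ 1 := by
      rw [div_le_one (by positivity)]; linarith
    have hhalf := half_le_arctan hs0.le hs1
    calc InnerProductGeometry.angle x x' ≤ Real.pi / (2 * c) * ‖x - x'‖ :=
          angle_le_dist hc x x' hxc hxc'
      _ ≤ Real.pi / (2 * c) * (24 * R / c * (1 / (h * dist (ek P) (ek Q)))) := by gcongr
      _ = 2 * A * (1 / (h * dist (ek P) (ek Q)) / 2) := by rw [hA]; ring
      _ ≤ 2 * A * Real.arctan (1 / (h * dist (ek P) (ek Q))) := by gcongr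
      _ ≤ (Real.pi / Real.arctan (1 / M) + 2 * A) *
          Real.arctan (1 / (h * dist (ek P) (ek Q))) := by
        gcongr
        have : 0 < Real.pi / Real.arctan (1 / M) := by positivity
        linarith

end
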